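/- Assume the integral VHI data hypotheses together with: K ⊆ V nonempty, closed and convex; A : V → V* Lipschitz continuous and strongly monotone with constant m_A > 0; Φ : V → ℝ convex and continuous; f ∈ V*; and α_ψ c_Δ² < m_A. Then the variational-hemivariational inequality: find u ∈ K such that ⟨Au, v − u⟩ + Φ(v) − Φ(u) + ∫_Δ ψ⁰(γ_ψ u(x); γ_ψ v(x) − γ_ψ u(x)) dμ(x) ≥ ⟨f, v − u⟩ for all v ∈ K, has a unique solution u ∈ K. Moreover, the solution depends Lipschitz continuously on f ∈ V*: if u₁, u₂ are the solutions corresponding to f₁, f₂ ∈ V*, then ‖u₁ − u₂‖_V ≤ c ‖f₁ − f₂‖_{V*} for a constant c > 0 independent of f₁, f₂. -/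

import Mathlib

open Filter Topology MeasureTheory RealInnerProductSpace

/-- The Clarke (generalized) directional derivative of `f` at `u` in direction `v`. -/
noncomputable def clarkeDeriv {X : Type*} [NormedAddCommGroup X] [NormedSpace ℝ X]
    (f : X → ℝ) (u v : X) : ℝ :=
  Filter.limsup (fun p : X × ℝ => (f (p.1 + p.2 • v) - f p.1) / p.2)
    ((𝓝 u) ×ˢ 𝓝[>] (0:ℝ))

/-!
A relaxed monotone `ψ` is convex up to a quadratic: `ψ + α/2 ‖·‖²` has a monotone generalized
derivative, hence is convex, and so is `a ↦ ∫ ψ(a) + α/2 ‖a‖²` on `L²`. Moving `α γ*γ` from the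
operator to the functional therefore turns the hemivariational inequality into an elliptic
variational inequality with a convex functional, and smallness of `α c²` says exactly that the
operator `A - α γ*γ` is still strongly monotone. Its solution is the fixed point of a contraction
built from the proximal map. Dominated convergence bounds the upper Dini derivatives of
`a ↦ ∫ ψ(a)` by the integrals of the generalized derivative, so the original inequality is
recovered from minimality along segments. Uniqueness and Lipschitz dependence follow by testing
two inequalities against each other.
-/

/-- `UpperDiniDerivLE f u v d` says that the upper Dini derivative of `f` at `u` in the direction
`v` is at most `d`. It records the only information on a nonsmooth function that a minimality
argument along a segment needs; being a predicate, it makes sense without boundedness of the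
quotients. -/
def UpperDiniDerivLE {X : Type*} [AddCommGroup X] [Module ℝ X] (f : X → ℝ) (u v : X) (d : ℝ) :
    Prop :=
  ∀ r, d < r → ∀ᶠ t in 𝓝[>] (0 : ℝ), (f (u + t • v) - f u) / t < r

namespace UpperDiniDerivLE

variable {X Y : Type*} [AddCommGroup X] [Module ℝ X] [AddCommGroup Y] [Module ℝ Y]
  {f g : X → ℝ} {u v : X} {d e : ℝ}

theorem add (hf : UpperDiniDerivLE f u v d) (hg : UpperDiniDerivLE g u v e) :
    UpperDiniDerivLE (fun x => f x + g x) u v (d + e) := by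
  intro r hr
  obtain ⟨ε, hε, rfl⟩ : ∃ ε > 0, r = d + e + ε := ⟨r - (d + e), sub_pos.2 hr, by ring⟩
  filter_upwards [hf (d + ε / 2) (by linarith), hg (e + ε / 2) (by linarith)] with t hft hgt
  rw [add_sub_add_comm, add_div]
  linarith

theorem comp_linear (L : X →ₗ[ℝ] Y) {f : Y → ℝ} (hf : UpperDiniDerivLE f (L u) (L v) d) :
    UpperDiniDerivLE (fun x => f (L x)) u v d := by
  simpa only [UpperDiniDerivLE, map_add, map_smul] using hf

theorem of_hasLineDerivAt (hf : HasLineDerivAt ℝ f d u v) : UpperDiniDerivLE f u v d := by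
  intro r hr
  filter_upwards [hf.tendsto_slope_zero_right.eventually_lt_const hr] with t ht
  rwa [div_eq_inv_mul]

theorem nonneg_of_isMinOn {Φ : X → ℝ} {K : Set X} (hΦ : ConvexOn ℝ K Φ)
    (hu : u ∈ K) (hmin : IsMinOn (fun x => Φ x + f x) K u) {w : X} (hw : w ∈ K)
    (hf : UpperDiniDerivLE f u (w - u) d) : 0 ≤ Φ w - Φ u + d := by
  refine le_of_forall_pos_le_add fun ε hε => ?_
  obtain ⟨t, ⟨ht0, ht1⟩, hquot⟩ :=
    (Filter.Eventually.and (Ioc_mem_nhdsGT one_pos) (hf (d + ε) (by linarith))).exists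
  have hconv : Φ (u + t • (w - u)) ≤ Φ u + t * (Φ w - Φ u) := by
    have h := hΦ.2 hu hw (sub_nonneg.2 ht1) ht0.le (by ring)
    rw [smul_eq_mul, smul_eq_mul] at h
    rw [show u + t • (w - u) = (1 - t) • u + t • w by module]
    linarith
  have hle : Φ u + f u ≤ Φ (u + t • (w - u)) + f (u + t • (w - u)) :=
    hmin (hΦ.1.add_smul_sub_mem hu hw ⟨ht0.le, ht1⟩)
  rw [div_lt_iff₀ ht0] at hquot
  have hmul : 0 ≤ t * (Φ w - Φ u + (d + ε)) := by linarith
  linarith [nonneg_of_mul_nonneg_right hmul ht0]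

end UpperDiniDerivLE

section Clarke

variable {X : Type*} [NormedAddCommGroup X] [NormedSpace ℝ X] {f g : X → ℝ}

theorem tendsto_add_smul_nhds (u v : X) :
    Tendsto (fun p : X × ℝ => p.1 + p.2 • v) (𝓝 u ×ˢ 𝓝[>] (0 : ℝ)) (𝓝 u) := by
  have h : Tendsto (fun p : X × ℝ => p.1 + p.2 • v) (𝓝 (u, 0)) (𝓝 (u + (0 : ℝ) • v)) :=
    Continuous.tendsto (by fun_prop) (u, 0)
  rw [zero_smul, add_zero, nhds_prod_eq] at h
  exact h.mono_left (Filter.prod_mono le_rfl nhdsWithin_le_nhds)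

theorem eventually_snd_pos {Y : Type*} [TopologicalSpace Y] (u : Y) :
    ∀ᶠ p in 𝓝 u ×ˢ 𝓝[>] (0 : ℝ), 0 < p.2 :=
  tendsto_snd.eventually (eventually_mem_nhdsWithin (a := (0 : ℝ)) (s := Set.Ioi 0))

theorem eventually_abs_quotient_le_of_lipschitzOnWith {L : NNReal} {s : Set X} {u : X}
    (hf : LipschitzOnWith L f s) (hs : s ∈ 𝓝 u) (v : X) :
    ∀ᶠ p in 𝓝 u ×ˢ 𝓝[>] (0 : ℝ), |(f (p.1 + p.2 • v) - f p.1) / p.2| ≤ L * ‖v‖ := by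
  filter_upwards [tendsto_fst.eventually hs, (tendsto_add_smul_nhds u v).eventually hs,
    eventually_snd_pos u] with p hp hpv hpos
  have h := hf.dist_le_mul _ hpv _ hp
  rw [Real.dist_eq, dist_eq_norm, add_sub_cancel_left, norm_smul, Real.norm_eq_abs,
    abs_of_pos hpos] at h
  rw [abs_div, abs_of_pos hpos, div_le_iff₀ hpos]
  linarith

theorem eventually_quotient_lt_of_clarkeDeriv_lt (hf : LocallyLipschitz f) {u v : X} {r : ℝ}
    (h : clarkeDeriv f u v < r) :
    ∀ᶠ p in 𝓝 u ×ˢ 𝓝[>] (0 : ℝ), (f (p.1 + p.2 • v) - f p.1) / p.2 < r := by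
  obtain ⟨L, s, hs, hL⟩ := hf u
  exact eventually_lt_of_limsup_lt h (isBoundedUnder_of_eventually_le
    ((eventually_abs_quotient_le_of_lipschitzOnWith hL hs v).mono fun p hp => (abs_le.1 hp).2))

theorem clarkeDeriv_le_of_eventually_quotient_le (hf : LocallyLipschitz f) {u v : X} {r : ℝ}
    (h : ∀ᶠ p in 𝓝 u ×ˢ 𝓝[>] (0 : ℝ), (f (p.1 + p.2 • v) - f p.1) / p.2 ≤ r) :
    clarkeDeriv f u v ≤ r := by
  obtain ⟨L, s, hs, hL⟩ := hf u
  exact limsup_le_of_le (isBoundedUnder_of_eventually_ge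
    ((eventually_abs_quotient_le_of_lipschitzOnWith hL hs v).mono
      fun p hp => (abs_le.1 hp).1)).isCoboundedUnder_le h

theorem upperDiniDerivLE_clarkeDeriv (hf : LocallyLipschitz f) (u v : X) :
    UpperDiniDerivLE f u v (clarkeDeriv f u v) := fun _ hr =>
  (tendsto_const_nhds.prodMk tendsto_id).eventually
    (eventually_quotient_lt_of_clarkeDeriv_lt hf hr)

theorem clarkeDeriv_zero_right (u : X) : clarkeDeriv f u 0 = 0 := by
  simp [clarkeDeriv]

theorem clarkeDeriv_add_right_le (hf : LocallyLipschitz f) (u v w : X) :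
    clarkeDeriv f u (v + w) ≤ clarkeDeriv f u v + clarkeDeriv f u w := by
  refine le_of_forall_pos_le_add fun ε hε => ?_
  have hv := eventually_quotient_lt_of_clarkeDeriv_lt hf
    (lt_add_of_pos_right (clarkeDeriv f u v) (half_pos hε))
  have hw := eventually_quotient_lt_of_clarkeDeriv_lt hf
    (lt_add_of_pos_right (clarkeDeriv f u w) (half_pos hε))
  refine clarkeDeriv_le_of_eventually_quotient_le hf ?_
  filter_upwards [((tendsto_add_smul_nhds u w).prodMk tendsto_snd).eventually hv, hw] with p hpv hpw
  have hsplit : (f (p.1 + p.2 • (v + w)) - f p.1) / p.2 =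
      (f (p.1 + p.2 • w + p.2 • v) - f (p.1 + p.2 • w)) / p.2 +
        (f (p.1 + p.2 • w) - f p.1) / p.2 := by
    rw [← add_div, smul_add, add_comm (p.2 • v), add_assoc]
    ring
  linarith

theorem clarkeDeriv_smul_right_le (hf : LocallyLipschitz f) (u v : X) {c : ℝ} (hc : 0 < c) :
    clarkeDeriv f u (c • v) ≤ c * clarkeDeriv f u v := by
  refine le_of_forall_pos_le_add fun ε hε => ?_
  have hv := eventually_quotient_lt_of_clarkeDeriv_lt hf
    (lt_add_of_pos_right (clarkeDeriv f u v) (div_pos hε hc))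
  have hmul : Tendsto (fun t : ℝ => t * c) (𝓝[>] 0) (𝓝[>] 0) := by
    refine tendsto_nhdsWithin_iff.2 ⟨?_, eventually_mem_nhdsWithin.mono fun t ht => mul_pos ht hc⟩
    simpa only [zero_mul] using
      ((continuous_mul_const c).tendsto (0 : ℝ)).mono_left nhdsWithin_le_nhds
  refine clarkeDeriv_le_of_eventually_quotient_le hf ?_
  filter_upwards [(tendsto_fst.prodMk (hmul.comp tendsto_snd)).eventually hv,
    eventually_snd_pos u] with p hp hpos
  simp only [Function.comp_apply] at hp
  rw [div_lt_iff₀ (mul_pos hpos hc)] at hp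
  rw [smul_smul, div_le_iff₀ hpos]
  refine hp.le.trans_eq ?_
  field_simp

theorem clarkeDeriv_smul_right (hf : LocallyLipschitz f) (u v : X) {c : ℝ} (hc : 0 < c) :
    clarkeDeriv f u (c • v) = c * clarkeDeriv f u v := by
  refine le_antisymm (clarkeDeriv_smul_right_le hf u v hc) ?_
  rw [← le_inv_mul_iff₀ hc]
  simpa only [inv_smul_smul₀ hc.ne'] using
    clarkeDeriv_smul_right_le hf u (c • v) (inv_pos.2 hc)

theorem neg_clarkeDeriv_le (hf : LocallyLipschitz f) (u v : X) :
    -clarkeDeriv f u v ≤ clarkeDeriv f u (-v) := by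
  have h := clarkeDeriv_add_right_le hf u v (-v)
  rw [add_neg_cancel, clarkeDeriv_zero_right] at h
  linarith

theorem clarkeDeriv_add_le (hf : LocallyLipschitz f) (hg : LocallyLipschitz g) (u v : X) :
    clarkeDeriv (fun x => f x + g x) u v ≤ clarkeDeriv f u v + clarkeDeriv g u v := by
  refine le_of_forall_pos_le_add fun ε hε => ?_
  refine clarkeDeriv_le_of_eventually_quotient_le (hf.add hg) ?_
  filter_upwards [eventually_quotient_lt_of_clarkeDeriv_lt hf
      (lt_add_of_pos_right (clarkeDeriv f u v) (half_pos hε)),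
    eventually_quotient_lt_of_clarkeDeriv_lt hg
      (lt_add_of_pos_right (clarkeDeriv g u v) (half_pos hε))] with p hpf hpg
  rw [add_sub_add_comm, add_div]
  linarith

theorem clarkeDeriv_eq_of_hasStrictFDerivAt {g' : X →L[ℝ] ℝ} {u : X}
    (hg : HasStrictFDerivAt g g' u) (v : X) : clarkeDeriv g u v = g' v := by
  refine Tendsto.limsup_eq ?_
  have hpair : Tendsto (fun p : X × ℝ => (p.1 + p.2 • v, p.1)) (𝓝 u ×ˢ 𝓝[>] (0 : ℝ))
      (𝓝 (u, u)) := (tendsto_add_smul_nhds u v).prodMk_nhds tendsto_fst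
  have hbigO : (fun p : X × ℝ => p.2 • v) =O[𝓝 u ×ˢ 𝓝[>] (0 : ℝ)] fun p => p.2 :=
    Asymptotics.IsBigO.of_bound ‖v‖ (Eventually.of_forall fun p => by rw [norm_smul, mul_comm])
  have hlittleO : (fun p : X × ℝ => g (p.1 + p.2 • v) - g p.1 - p.2 * g' v)
      =o[𝓝 u ×ˢ 𝓝[>] (0 : ℝ)] fun p => p.2 := by
    simpa only [Function.comp_def, add_sub_cancel_left, map_smul, smul_eq_mul] using
      (hg.isLittleO.comp_tendsto hpair).trans_isBigO
        (by simpa only [Function.comp_def, add_sub_cancel_left] using hbigO)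
  rw [← tendsto_sub_nhds_zero_iff]
  refine hlittleO.tendsto_div_nhds_zero.congr' ?_
  filter_upwards [eventually_snd_pos u] with p hpos
  rw [sub_div, mul_div_cancel_left₀ _ hpos.ne']

theorem clarkeDeriv_le_of_lipschitzOnWith (hf : LocallyLipschitz f) {L : NNReal} {s : Set X} {u : X}
    (hL : LipschitzOnWith L f s) (hs : s ∈ 𝓝 u) (v : X) : clarkeDeriv f u v ≤ L * ‖v‖ :=
  clarkeDeriv_le_of_eventually_quotient_le hf
    ((eventually_abs_quotient_le_of_lipschitzOnWith hL hs v).mono fun _ hp => (abs_le.1 hp).2)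

theorem upperSemicontinuous_clarkeDeriv (hf : LocallyLipschitz f) :
    UpperSemicontinuous fun p : X × X => clarkeDeriv f p.1 p.2 := by
  rintro ⟨u, v⟩ r hr
  obtain ⟨L, s, hs, hL⟩ := hf u
  obtain ⟨r', hr', hrr'⟩ := exists_between hr
  have hfixed : ∀ᶠ z in 𝓝 u, clarkeDeriv f z v ≤ r' := by
    obtain ⟨P, hP, Q, hQ, hPQ⟩ :=
      Filter.eventually_prod_iff.1 (eventually_quotient_lt_of_clarkeDeriv_lt hf hr')
    filter_upwards [hP.eventually_nhds] with z hz
    refine clarkeDeriv_le_of_eventually_quotient_le hf ?_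
    filter_upwards [tendsto_fst.eventually hz, tendsto_snd.eventually hQ] with p hp hq
    exact (hPQ hp hq).le
  have hlim : Tendsto (fun p : X × X => r' + L * ‖p.2 - v‖) (𝓝 (u, v)) (𝓝 r') := by
    simpa using (by fun_prop : Continuous fun p : X × X => r' + L * ‖p.2 - v‖).tendsto (u, v)
  have hfst : Tendsto Prod.fst (𝓝 (u, v)) (𝓝 u) := continuous_fst.tendsto (u, v)
  filter_upwards [hfst.eventually hfixed, hfst.eventually (eventually_mem_nhds_iff.2 hs),
    hlim.eventually_lt_const hrr'] with p hpv hps hpr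
  have hsub := clarkeDeriv_add_right_le hf p.1 v (p.2 - v)
  rw [add_sub_cancel] at hsub
  linarith [clarkeDeriv_le_of_lipschitzOnWith hf hL hps (p.2 - v)]

theorem sub_le_of_clarkeDeriv_le (hf : LocallyLipschitz f) {x y : X} {r : ℝ}
    (h : ∀ s ∈ Set.Ico (0 : ℝ) 1, clarkeDeriv f (x + s • (y - x)) (y - x) ≤ r) :
    f y - f x ≤ r := by
  have hcont : Continuous fun s : ℝ => f (x + s • (y - x)) := hf.continuous.comp (by fun_prop)
  have hslope : ∀ s ∈ Set.Ico (0 : ℝ) 1, ∀ r', r < r' →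
      ∃ᶠ z in 𝓝[>] s, slope (fun s : ℝ => f (x + s • (y - x))) s z < r' := by
    intro s hs r' hr'
    have hDini := upperDiniDerivLE_clarkeDeriv hf _ _ r' ((h s hs).trans_lt hr')
    have hshift : Tendsto (fun z : ℝ => z - s) (𝓝[>] s) (𝓝[>] 0) := by
      refine tendsto_nhdsWithin_iff.2
        ⟨?_, eventually_mem_nhdsWithin.mono fun z hz => sub_pos.2 (Set.mem_Ioi.1 hz)⟩
      simpa only [sub_self] using
        ((continuous_sub_right s).tendsto s).mono_left nhdsWithin_le_nhds
    refine Eventually.frequently ((hshift.eventually hDini).mono fun z hz => ?_)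
    rwa [slope_def_field,
      show x + z • (y - x) = x + s • (y - x) + (z - s) • (y - x) by module]
  have hmean := image_le_of_liminf_slope_right_le_deriv_boundary
    (B := fun s => f x + s * r) (B' := fun _ => r) hcont.continuousOn (by simp) (by fun_prop)
    (fun s _ => (((hasDerivAt_id s).mul_const r).const_add (f x)).hasDerivWithinAt.congr_deriv
      (one_mul r)) hslope (Set.right_mem_Icc.2 zero_le_one)
  simp only [one_smul, add_sub_cancel, one_mul] at hmean
  linarith

theorem convexOn_of_clarkeDeriv_add_clarkeDeriv_nonpos (hf : LocallyLipschitz f)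
    (hmono : ∀ x y, clarkeDeriv f x (y - x) + clarkeDeriv f y (x - y) ≤ 0) :
    ConvexOn ℝ Set.univ f := by
  refine convexOn_iff_forall_pos.2 ⟨convex_univ, fun x _ y _ a b ha hb hab => ?_⟩
  obtain rfl : a = 1 - b := by linarith
  set c := (1 - b) • x + b • y with hc
  set d := y - x with hd
  have hcx : c - x = b • d := by rw [hc, hd]; module
  have hcy : c - y = (1 - b) • -d := by rw [hc, hd]; module
  have hcross : ∀ s ∈ Set.Ico (0 : ℝ) 1, ∀ t ∈ Set.Ico (0 : ℝ) 1,
      clarkeDeriv f (x + s • b • d) d ≤ -clarkeDeriv f (y + t • (1 - b) • -d) (-d) := by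
    intro s hs t ht
    have hgap : 0 < 1 - t * (1 - b) - s * b := by nlinarith [hs.2, ht.2]
    have h := hmono (x + s • b • d) (y + t • (1 - b) • -d)
    rw [show y + t • (1 - b) • -d - (x + s • b • d) = (1 - t * (1 - b) - s * b) • d by
        rw [hd]; module,
      show x + s • b • d - (y + t • (1 - b) • -d) = (1 - t * (1 - b) - s * b) • -d by
        rw [hd]; module,
      clarkeDeriv_smul_right hf _ _ hgap, clarkeDeriv_smul_right hf _ _ hgap, ← mul_add] at h
    linarith [nonpos_of_mul_nonpos_right h hgap]
  have hleft : ∀ t ∈ Set.Ico (0 : ℝ) 1,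
      f c - f x ≤ b * -clarkeDeriv f (y + t • (1 - b) • -d) (-d) := fun t ht =>
    sub_le_of_clarkeDeriv_le hf fun s hs => by
      rw [hcx, clarkeDeriv_smul_right hf _ _ hb]
      exact mul_le_mul_of_nonneg_left (hcross s hs t ht) hb.le
  have hright : f c - f y ≤ (1 - b) * (-(f c - f x) / b) :=
    sub_le_of_clarkeDeriv_le hf fun t ht => by
      rw [hcy, clarkeDeriv_smul_right hf _ _ ha]
      refine mul_le_mul_of_nonneg_left ?_ ha.le
      rw [le_div_iff₀ hb]
      linarith [hleft t ht]
  rw [smul_eq_mul, smul_eq_mul]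
  rw [mul_div_assoc', le_div_iff₀ hb] at hright
  linarith

end Clarke

section ClarkeInner

variable {E : Type*} [NormedAddCommGroup E] [InnerProductSpace ℝ E] {f : E → ℝ}

theorem convexOn_add_norm_sq_of_clarkeDeriv_add_le (hf : LocallyLipschitz f) {α : ℝ}
    (hmono : ∀ x y, clarkeDeriv f x (y - x) + clarkeDeriv f y (x - y) ≤ α * ‖x - y‖ ^ 2) :
    ConvexOn ℝ Set.univ fun z => f z + α / 2 * ‖z‖ ^ 2 := by
  have hsq : LocallyLipschitz fun z : E => α / 2 * ‖z‖ ^ 2 :=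
    ContDiff.locallyLipschitz (𝕂 := ℝ) (contDiff_const.mul (contDiff_norm_sq ℝ))
  have hle : ∀ u v,
      clarkeDeriv (fun z => f z + α / 2 * ‖z‖ ^ 2) u v ≤ clarkeDeriv f u v + α * ⟪u, v⟫ := by
    intro u v
    refine (clarkeDeriv_add_le hf hsq u v).trans_eq ?_
    rw [clarkeDeriv_eq_of_hasStrictFDerivAt ((hasStrictFDerivAt_norm_sq u).const_mul (α / 2))]
    simp only [_root_.smul_apply, innerSL_apply_apply, smul_eq_mul, nsmul_eq_mul]
    ring
  refine convexOn_of_clarkeDeriv_add_clarkeDeriv_nonpos (hf.add hsq) fun x y => ?_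
  have hinner : α * ⟪x, y - x⟫ + α * ⟪y, x - y⟫ = -(α * ‖x - y‖ ^ 2) := by
    rw [← real_inner_self_eq_norm_sq]
    simp only [inner_sub_left, inner_sub_right]
    ring
  linarith [hle x (y - x), hle y (x - y), hmono x y]

/-- The Clarke subdifferential `∂f(z)`, with functionals on `E` represented by vectors through the
inner product; it carries the growth hypothesis on `f`. -/
def clarkeSubdifferential (f : E → ℝ) (z : E) : Set E :=
  {ξ | ∀ w, ⟪ξ, w⟫ ≤ clarkeDeriv f z w}

theorem exists_mem_clarkeSubdifferential_inner_eq [CompleteSpace E] (hf : LocallyLipschitz f)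
    (z w : E) : ∃ ξ ∈ clarkeSubdifferential f z, ⟪ξ, w⟫ = clarkeDeriv f z w := by
  obtain ⟨L, s, hs, hL⟩ := hf z
  have hspan : ∀ c : ℝ, c * clarkeDeriv f z w ≤ clarkeDeriv f z (c • w) := by
    intro c
    rcases lt_trichotomy c 0 with hc | rfl | hc
    · have h := neg_clarkeDeriv_le hf z (-c • w)
      rw [clarkeDeriv_smul_right hf z w (neg_pos.2 hc), neg_smul, neg_neg] at h
      linarith
    · simp [clarkeDeriv_zero_right]
    · exact (clarkeDeriv_smul_right hf z w hc).ge
  have hwell : ∀ c : ℝ, c • w = 0 → c • clarkeDeriv f z w = 0 := by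
    intro c hc
    rcases smul_eq_zero.1 hc with rfl | rfl
    · exact zero_smul _ _
    · rw [clarkeDeriv_zero_right, smul_zero]
  obtain ⟨ℓ, hext, hle⟩ := exists_extension_of_le_sublinear
    (LinearPMap.mkSpanSingleton' w (clarkeDeriv f z w) hwell) (clarkeDeriv f z)
    (fun c hc x => clarkeDeriv_smul_right hf z x hc) (clarkeDeriv_add_right_le hf z) (by
      rintro ⟨x, hx⟩
      obtain ⟨c, rfl⟩ := Submodule.mem_span_singleton.1 hx
      rw [LinearPMap.mkSpanSingleton'_apply]
      exact hspan c)
  have hbound : ∀ x, ‖ℓ x‖ ≤ L * ‖x‖ := fun x => abs_le.2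
    ⟨neg_le.1 (by simpa using (hle (-x)).trans (clarkeDeriv_le_of_lipschitzOnWith hf hL hs (-x))),
      (hle x).trans (clarkeDeriv_le_of_lipschitzOnWith hf hL hs x)⟩
  have hinner : ∀ x, ⟪(InnerProductSpace.toDual ℝ E).symm (ℓ.mkContinuous L hbound), x⟫ = ℓ x :=
    fun x => InnerProductSpace.toDual_symm_apply
  refine ⟨_, fun x => (hinner x).trans_le (hle x), (hinner w).trans ?_⟩
  exact (hext ⟨w, Submodule.mem_span_singleton_self w⟩).trans
    (LinearPMap.mkSpanSingleton'_apply_self _ _ hwell _)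

theorem clarkeDeriv_le_of_norm_clarkeSubdifferential_le [CompleteSpace E] (hf : LocallyLipschitz f)
    {z : E} {M : ℝ} (hM : ∀ ξ ∈ clarkeSubdifferential f z, ‖ξ‖ ≤ M) (w : E) :
    clarkeDeriv f z w ≤ M * ‖w‖ := by
  obtain ⟨ξ, hξ, hξw⟩ := exists_mem_clarkeSubdifferential_inner_eq hf z w
  rw [← hξw]
  refine (real_inner_le_norm ξ w).trans ?_
  gcongr
  exact hM ξ hξ

end ClarkeInner

section ClarkeGrowth

variable {X : Type*} [NormedAddCommGroup X] [NormedSpace ℝ X] {f : X → ℝ} {c : NNReal}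

theorem abs_clarkeDeriv_le_of_clarkeDeriv_le (hf : LocallyLipschitz f)
    (hG : ∀ z w, clarkeDeriv f z w ≤ c * (1 + ‖z‖) * ‖w‖) (z w : X) :
    |clarkeDeriv f z w| ≤ c * (1 + ‖z‖) * ‖w‖ := by
  refine abs_le'.2 ⟨hG z w, (neg_clarkeDeriv_le hf z w).trans ?_⟩
  simpa only [norm_neg] using hG z (-w)

theorem lipschitzOnWith_closedBall_of_clarkeDeriv_le (hf : LocallyLipschitz f)
    (hG : ∀ z w, clarkeDeriv f z w ≤ c * (1 + ‖z‖) * ‖w‖) (R : NNReal) :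
    LipschitzOnWith (c * (1 + R)) f (Metric.closedBall 0 R) := by
  refine LipschitzOnWith.of_le_add_mul _ fun y hy x hx => ?_
  rw [← sub_le_iff_le_add', dist_eq_norm]
  refine sub_le_of_clarkeDeriv_le hf fun s hs => (hG _ _).trans ?_
  have hseg : x + s • (y - x) ∈ Metric.closedBall (0 : X) R :=
    (convex_closedBall 0 _).add_smul_sub_mem hx hy (Set.Ico_subset_Icc_self hs)
  push_cast
  gcongr
  exact mem_closedBall_zero_iff.1 hseg

theorem abs_quotient_le_of_clarkeDeriv_le (hf : LocallyLipschitz f)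
    (hG : ∀ z w, clarkeDeriv f z w ≤ c * (1 + ‖z‖) * ‖w‖) (z w : X) {t : ℝ}
    (ht : t ∈ Set.Ioc (0 : ℝ) 1) :
    |(f (z + t • w) - f z) / t| ≤ c * (1 + (‖z‖ + ‖w‖)) * ‖w‖ := by
  have htw : ‖t • w‖ ≤ ‖w‖ := by
    rw [norm_smul, Real.norm_of_nonneg ht.1.le]
    exact mul_le_of_le_one_left (norm_nonneg w) ht.2
  have h := (lipschitzOnWith_closedBall_of_clarkeDeriv_le hf hG (‖z‖₊ + ‖w‖₊)).dist_le_mul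
    (z + t • w) (mem_closedBall_zero_iff.2 ((norm_add_le _ _).trans (by push_cast; gcongr)))
    z (mem_closedBall_zero_iff.2 (by simp))
  rw [Real.dist_eq, dist_eq_norm, add_sub_cancel_left, norm_smul, Real.norm_of_nonneg ht.1.le] at h
  push_cast at h
  rw [abs_div, abs_of_pos ht.1, div_le_iff₀ ht.1]
  linarith

theorem isBigO_top_of_clarkeDeriv_le (hf : LocallyLipschitz f)
    (hG : ∀ z w, clarkeDeriv f z w ≤ c * (1 + ‖z‖) * ‖w‖) :
    f =O[⊤] fun z => 1 + ‖z‖ ^ 2 := by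
  refine Asymptotics.isBigO_top.2 ⟨|f 0| + 2 * c, fun z => ?_⟩
  have h := abs_quotient_le_of_clarkeDeriv_le hf hG 0 z (t := 1) (by simp)
  rw [one_smul, zero_add, div_one, norm_zero, zero_add] at h
  have habs : |f z| ≤ |f 0| + c * ((1 + ‖z‖) * ‖z‖) := by
    have := abs_sub_abs_le_abs_sub (f z) (f 0)
    linarith
  rw [Real.norm_eq_abs, Real.norm_of_nonneg (by positivity)]
  calc |f z| ≤ |f 0| + c * ((1 + ‖z‖) * ‖z‖) := habs
    _ ≤ |f 0| * (1 + ‖z‖ ^ 2) + c * (2 * (1 + ‖z‖ ^ 2)) :=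
      add_le_add (le_mul_of_one_le_right (abs_nonneg _) (by linarith [sq_nonneg ‖z‖]))
        (mul_le_mul_of_nonneg_left (by nlinarith [sq_nonneg (‖z‖ - 1)]) c.2)
    _ = (|f 0| + 2 * c) * (1 + ‖z‖ ^ 2) := by ring

end ClarkeGrowth

section IntegralFunctional

variable {E : Type*} [NormedAddCommGroup E] {Δ : Type*} [MeasurableSpace Δ] {μ : Measure Δ}

theorem integrable_norm_sq_coeFn (a : Lp E 2 μ) : Integrable (fun x => ‖a x‖ ^ 2) μ :=
  (memLp_two_iff_integrable_sq_norm (Lp.aestronglyMeasurable a)).1 (Lp.memLp a)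

theorem integrable_mul_one_add_norm_mul_norm [IsFiniteMeasure μ] (c : ℝ) (a h : Lp E 2 μ) :
    Integrable (fun x => c * (1 + (‖a x‖ + ‖h x‖)) * ‖h x‖) μ := by
  have hsum : MemLp (fun x => 1 + (‖a x‖ + ‖h x‖)) 2 μ :=
    (memLp_const (1 : ℝ)).add ((Lp.memLp a).norm.add (Lp.memLp h).norm)
  exact (hsum.const_mul c).integrable_mul (Lp.memLp h).norm

theorem isBigO_top_add_norm_sq {f : E → ℝ} (hO : f =O[⊤] fun z => 1 + ‖z‖ ^ 2)
    (α : ℝ) :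
    (fun z => f z + α / 2 * ‖z‖ ^ 2) =O[⊤] fun z => 1 + ‖z‖ ^ 2 := by
  refine hO.add (Asymptotics.IsBigO.const_mul_left (Asymptotics.isBigO_top.2 ⟨1, fun z => ?_⟩) _)
  rw [Real.norm_of_nonneg (by positivity), Real.norm_of_nonneg (by positivity)]
  linarith

theorem integrable_comp_coeFn_of_isBigO [IsFiniteMeasure μ] {f : E → ℝ} (hf : Continuous f)
    (hO : f =O[⊤] fun z => 1 + ‖z‖ ^ 2) (a : Lp E 2 μ) : Integrable (fun x => f (a x)) μ := by
  obtain ⟨C, hC⟩ := Asymptotics.isBigO_top.1 hO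
  exact Integrable.mono' (((integrable_const 1).add (integrable_norm_sq_coeFn a)).norm.const_mul C)
    (hf.comp_aestronglyMeasurable (Lp.aestronglyMeasurable a))
    (Eventually.of_forall fun x => hC (a x))

theorem convexOn_integral_comp [NormedSpace ℝ E] {p : ENNReal} {f : E → ℝ}
    (hf : ConvexOn ℝ Set.univ f) (hint : ∀ a : Lp E p μ, Integrable (fun x => f (a x)) μ) :
    ConvexOn ℝ Set.univ fun a : Lp E p μ => ∫ x, f (a x) ∂μ := by
  refine ⟨convex_univ, fun a _ b _ s t hs ht hst => ?_⟩
  simp only [smul_eq_mul]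
  rw [← integral_const_mul, ← integral_const_mul,
    ← integral_add ((hint a).const_mul s) ((hint b).const_mul t)]
  refine integral_mono_ae (hint _) (((hint a).const_mul s).add ((hint b).const_mul t)) ?_
  filter_upwards [Lp.coeFn_add (s • a) (t • b), Lp.coeFn_smul s a, Lp.coeFn_smul t b]
    with x hadd hsmula hsmulb
  rw [hadd, Pi.add_apply, hsmula, hsmulb]
  exact hf.2 (Set.mem_univ _) (Set.mem_univ _) hs ht hst

section Clarke

variable [NormedSpace ℝ E] {f : E → ℝ} {c : NNReal}

theorem integrable_clarkeDeriv [IsFiniteMeasure μ] (hf : LocallyLipschitz f)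
    (hG : ∀ z w, clarkeDeriv f z w ≤ c * (1 + ‖z‖) * ‖w‖) (a h : Lp E 2 μ) :
    Integrable (fun x => clarkeDeriv f (a x) (h x)) μ := by
  refine (integrable_mul_one_add_norm_mul_norm c a h).mono' ?_ (Eventually.of_forall fun x => ?_)
  · borelize (E × E)
    exact ((upperSemicontinuous_clarkeDeriv hf).measurable.comp_aemeasurable
      ((Lp.aestronglyMeasurable a).prodMk
        (Lp.aestronglyMeasurable h)).aemeasurable).aestronglyMeasurable
  · refine (abs_clarkeDeriv_le_of_clarkeDeriv_le hf hG _ _).trans ?_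
    gcongr
    exact le_add_of_nonneg_right (norm_nonneg _)

theorem tendsto_max_quotient_clarkeDeriv (hf : LocallyLipschitz f) (u v : E) :
    Tendsto (fun t => max ((f (u + t • v) - f u) / t) (clarkeDeriv f u v)) (𝓝[>] 0)
      (𝓝 (clarkeDeriv f u v)) := by
  refine tendsto_order.2 ⟨fun r hr => Eventually.of_forall fun t => lt_max_of_lt_right hr,
    fun r hr => ?_⟩
  filter_upwards [upperDiniDerivLE_clarkeDeriv hf u v r hr] with t ht
  exact max_lt ht hr

theorem comp_coeFn_add_smul_ae_eq {β : Type*} {p : ENNReal} (f : E → β) (a h : Lp E p μ) (t : ℝ) :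
    (fun x => f ((a + t • h) x)) =ᵐ[μ] fun x => f (a x + t • h x) := by
  filter_upwards [Lp.coeFn_add a (t • h), Lp.coeFn_smul t h] with x hadd hsmul
  rw [hadd, Pi.add_apply, hsmul, Pi.smul_apply]

theorem integrable_quotient_comp_coeFn {p : ENNReal}
    (hint : ∀ a : Lp E p μ, Integrable (fun x => f (a x)) μ) (a h : Lp E p μ) (t : ℝ) :
    Integrable (fun x => (f (a x + t • h x) - f (a x)) / t) μ :=
  (((hint (a + t • h)).congr (comp_coeFn_add_smul_ae_eq f a h t)).sub (hint a)).div_const t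

theorem quotient_integral_comp_coeFn {p : ENNReal}
    (hint : ∀ a : Lp E p μ, Integrable (fun x => f (a x)) μ) (a h : Lp E p μ) (t : ℝ) :
    ((∫ x, f ((a + t • h) x) ∂μ) - ∫ x, f (a x) ∂μ) / t =
      ∫ x, (f (a x + t • h x) - f (a x)) / t ∂μ := by
  have hae := comp_coeFn_add_smul_ae_eq f a h t
  rw [integral_congr_ae hae, ← integral_sub ((hint _).congr hae) (hint a), integral_div]

theorem upperDiniDerivLE_integral_comp [IsFiniteMeasure μ] (hf : LocallyLipschitz f)
    (hG : ∀ z w, clarkeDeriv f z w ≤ c * (1 + ‖z‖) * ‖w‖) (a h : Lp E 2 μ) :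
    UpperDiniDerivLE (fun a : Lp E 2 μ => ∫ x, f (a x) ∂μ) a h
      (∫ x, clarkeDeriv f (a x) (h x) ∂μ) := by
  have hD := integrable_clarkeDeriv hf hG a h
  have hint := integrable_comp_coeFn_of_isBigO (μ := μ) hf.continuous
    (isBigO_top_of_clarkeDeriv_le hf hG)
  have hq := integrable_quotient_comp_coeFn hint a h
  have hDle : ∀ x, |clarkeDeriv f (a x) (h x)| ≤ c * (1 + (‖a x‖ + ‖h x‖)) * ‖h x‖ := fun x =>
    (abs_clarkeDeriv_le_of_clarkeDeriv_le hf hG _ _).trans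
      (by gcongr; exact le_add_of_nonneg_right (norm_nonneg _))
  have hlim : Tendsto
      (fun t => ∫ x, max ((f (a x + t • h x) - f (a x)) / t) (clarkeDeriv f (a x) (h x)) ∂μ)
      (𝓝[>] 0) (𝓝 (∫ x, clarkeDeriv f (a x) (h x) ∂μ)) := by
    refine tendsto_integral_filter_of_dominated_convergence _
      (Eventually.of_forall fun t => ((hq t).sup hD).aestronglyMeasurable) ?_
      (integrable_mul_one_add_norm_mul_norm c a h)
      (Eventually.of_forall fun x => tendsto_max_quotient_clarkeDeriv hf (a x) (h x))
    filter_upwards [Ioc_mem_nhdsGT one_pos] with t ht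
    exact Eventually.of_forall fun x => abs_max_le_max_abs_abs.trans
      (max_le (abs_quotient_le_of_clarkeDeriv_le hf hG _ _ ht) (hDle x))
  intro r hr
  filter_upwards [hlim.eventually_lt_const hr] with t ht
  rw [quotient_integral_comp_coeFn hint]
  exact (integral_mono (hq t) ((hq t).sup hD) fun x => le_max_left _ _).trans_lt ht

theorem integral_clarkeDeriv_coeFn_sub {p : ENNReal} (a b : Lp E p μ) :
    ∫ x, clarkeDeriv f (a x) ((b - a) x) ∂μ = ∫ x, clarkeDeriv f (a x) (b x - a x) ∂μ :=
  integral_congr_ae ((Lp.coeFn_sub b a).mono fun x hx => by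
    simp only [hx, Pi.sub_apply])

end Clarke

section Inner

variable [InnerProductSpace ℝ E] {f : E → ℝ}

theorem integral_norm_sq_coeFn (a : Lp E 2 μ) : ∫ x, ‖a x‖ ^ 2 ∂μ = ‖a‖ ^ 2 := by
  rw [← real_inner_self_eq_norm_sq, L2.inner_def]
  simp only [real_inner_self_eq_norm_sq]

theorem continuous_integral_comp_of_convexOn [IsFiniteMeasure μ] (hconv : ConvexOn ℝ Set.univ f)
    (hf : Continuous f) (hO : f =O[⊤] fun z => 1 + ‖z‖ ^ 2) :
    Continuous fun a : Lp E 2 μ => ∫ x, f (a x) ∂μ := by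
  have hint := integrable_comp_coeFn_of_isBigO (μ := μ) hf hO
  obtain ⟨C, hC⟩ := Asymptotics.isBigO_top.1 hO
  have hle : ∀ a : Lp E 2 μ, ∫ x, f (a x) ∂μ ≤ C * (μ.real Set.univ + ‖a‖ ^ 2) := by
    intro a
    have hsq := (integrable_const (1 : ℝ)).fun_add (integrable_norm_sq_coeFn a)
    calc ∫ x, f (a x) ∂μ ≤ ∫ x, C * (1 + ‖a x‖ ^ 2) ∂μ :=
          integral_mono (hint a) (hsq.const_mul C) fun x => by
            simpa only [Real.norm_of_nonneg (show 0 ≤ 1 + ‖a x‖ ^ 2 by positivity)] using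
              (le_abs_self _).trans (hC (a x))
      _ = C * (μ.real Set.univ + ‖a‖ ^ 2) := by
          rw [integral_const_mul, integral_add (integrable_const _) (integrable_norm_sq_coeFn a),
            integral_norm_sq_coeFn, integral_const, smul_eq_mul, mul_one]
  have hbdd : ∃ a₀ ∈ (Set.univ : Set (Lp E 2 μ)),
      (𝓝 a₀).IsBoundedUnder (· ≤ ·) fun a => ∫ x, f (a x) ∂μ :=
    ⟨0, Set.mem_univ _, (Continuous.tendsto (by fun_prop : Continuous fun a : Lp E 2 μ =>
      C * (μ.real Set.univ + ‖a‖ ^ 2)) 0).isBoundedUnder_le.mono_le (Eventually.of_forall hle)⟩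
  have htfae :=
    (convexOn_integral_comp hconv hint).continuousOn_tfae isOpen_univ Set.univ_nonempty
  exact continuousOn_univ.1 ((htfae.out 3 1).1 hbdd)

theorem integral_clarkeDeriv_add_le [IsFiniteMeasure μ] {c : NNReal} (hf : LocallyLipschitz f)
    (hG : ∀ z w, clarkeDeriv f z w ≤ c * (1 + ‖z‖) * ‖w‖) {α : ℝ}
    (hmono : ∀ x y, clarkeDeriv f x (y - x) + clarkeDeriv f y (x - y) ≤ α * ‖x - y‖ ^ 2)
    (a b : Lp E 2 μ) :
    (∫ x, clarkeDeriv f (a x) (b x - a x) ∂μ) + ∫ x, clarkeDeriv f (b x) (a x - b x) ∂μ ≤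
      α * ‖a - b‖ ^ 2 := by
  have hab := integrable_clarkeDeriv hf hG a (b - a)
  have hba := integrable_clarkeDeriv hf hG b (a - b)
  rw [← integral_clarkeDeriv_coeFn_sub, ← integral_clarkeDeriv_coeFn_sub, ← integral_add hab hba,
    ← integral_norm_sq_coeFn, ← integral_const_mul]
  refine integral_mono_ae (hab.add hba) ((integrable_norm_sq_coeFn (a - b)).const_mul α) ?_
  filter_upwards [Lp.coeFn_sub a b, Lp.coeFn_sub b a] with x hx hx'
  simpa only [Pi.add_apply, hx, hx', Pi.sub_apply] using hmono (a x) (b x)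

theorem integral_comp_add_norm_sq [IsFiniteMeasure μ] (hf : Continuous f)
    (hO : f =O[⊤] fun z => 1 + ‖z‖ ^ 2) (α : ℝ) (a : Lp E 2 μ) :
    ∫ x, (f (a x) + α / 2 * ‖a x‖ ^ 2) ∂μ = (∫ x, f (a x) ∂μ) + α / 2 * ‖a‖ ^ 2 := by
  rw [integral_add (integrable_comp_coeFn_of_isBigO hf hO a)
    ((integrable_norm_sq_coeFn a).const_mul _), integral_const_mul, integral_norm_sq_coeFn]

theorem convexOn_integral_comp_add_norm_sq [IsFiniteMeasure μ] {c : NNReal}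
    (hf : LocallyLipschitz f) (hG : ∀ z w, clarkeDeriv f z w ≤ c * (1 + ‖z‖) * ‖w‖) {α : ℝ}
    (hmono : ∀ x y, clarkeDeriv f x (y - x) + clarkeDeriv f y (x - y) ≤ α * ‖x - y‖ ^ 2) :
    ConvexOn ℝ Set.univ fun a : Lp E 2 μ => (∫ x, f (a x) ∂μ) + α / 2 * ‖a‖ ^ 2 := by
  have hO := isBigO_top_of_clarkeDeriv_le hf hG
  simp only [← integral_comp_add_norm_sq hf.continuous hO]
  exact convexOn_integral_comp (convexOn_add_norm_sq_of_clarkeDeriv_add_le hf hmono)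
    (integrable_comp_coeFn_of_isBigO (hf.continuous.add (by fun_prop))
      (isBigO_top_add_norm_sq hO α))

theorem continuous_integral_comp_of_clarkeDeriv_add_le [IsFiniteMeasure μ] {c : NNReal}
    (hf : LocallyLipschitz f) (hG : ∀ z w, clarkeDeriv f z w ≤ c * (1 + ‖z‖) * ‖w‖) {α : ℝ}
    (hmono : ∀ x y, clarkeDeriv f x (y - x) + clarkeDeriv f y (x - y) ≤ α * ‖x - y‖ ^ 2) :
    Continuous fun a : Lp E 2 μ => ∫ x, f (a x) ∂μ := by
  have hO := isBigO_top_of_clarkeDeriv_le hf hG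
  have h : Continuous fun a : Lp E 2 μ => ∫ x, (f (a x) + α / 2 * ‖a x‖ ^ 2) ∂μ :=
    continuous_integral_comp_of_convexOn (convexOn_add_norm_sq_of_clarkeDeriv_add_le hf hmono)
      (hf.continuous.add (by fun_prop)) (isBigO_top_add_norm_sq hO α)
  simp only [integral_comp_add_norm_sq hf.continuous hO] at h
  simpa only [add_sub_cancel_right] using
    h.fun_sub (by fun_prop : Continuous fun a : Lp E 2 μ => α / 2 * ‖a‖ ^ 2)

end Inner

end IntegralFunctional

section Hilbert

variable {V : Type*} [NormedAddCommGroup V] [InnerProductSpace ℝ V]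

theorem upperDiniDerivLE_norm_sq (α : ℝ) (u v : V) :
    UpperDiniDerivLE (fun x : V => α / 2 * ‖x‖ ^ 2) u v (α * ⟪u, v⟫) := by
  refine UpperDiniDerivLE.of_hasLineDerivAt ?_
  convert ((hasStrictFDerivAt_norm_sq u).const_mul (α / 2)).hasFDerivAt.hasLineDerivAt v using 1
  simp only [_root_.smul_apply, innerSL_apply_apply, smul_eq_mul, nsmul_eq_mul]
  ring

theorem upperDiniDerivLE_inner (p u v : V) :
    UpperDiniDerivLE (fun x : V => ⟪p, x⟫) u v ⟪p, v⟫ :=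
  .of_hasLineDerivAt ((innerSL ℝ p).hasFDerivAt.hasLineDerivAt v)

variable {K : Set V} {F φ : V → ℝ} {κ : ℝ}

theorem exists_affine_le_of_convexOn (hφ : ConvexOn ℝ K φ) (hlsc : LowerSemicontinuousOn φ K)
    (hKcl : IsClosed K) : ∃ (l : V →L[ℝ] ℝ) (c : ℝ), ∀ v ∈ K, l v + c ≤ φ v := by
  rcases K.eq_empty_or_nonempty with rfl | ⟨x, hx⟩
  · exact ⟨0, 0, fun v hv => hv.elim⟩
  obtain ⟨l, c, hl, -⟩ := hφ.exists_affine_le_of_lt (𝕜 := ℝ) hx (sub_one_lt _) hKcl hlsc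
  exact ⟨l, c, fun v hv => hl ⟨v, hv⟩⟩

theorem bddBelow_image_of_strongConvexOn (hκ : 0 < κ) (hF : StrongConvexOn K κ F)
    (hlsc : LowerSemicontinuousOn F K) (hKcl : IsClosed K) : BddBelow (F '' K) := by
  have hlsc' : LowerSemicontinuousOn (fun v => F v - κ / 2 * ‖v‖ ^ 2) K :=
    hlsc.add ((Continuous.lowerSemicontinuous (f := fun v : V => -(κ / 2 * ‖v‖ ^ 2))
      (by fun_prop)).lowerSemicontinuousOn K)
  obtain ⟨l, c, hl⟩ := exists_affine_le_of_convexOn (strongConvexOn_iff_convex.1 hF) hlsc' hKcl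
  refine ⟨c - ‖l‖ ^ 2 / (2 * κ), ?_⟩
  rintro _ ⟨v, hv, rfl⟩
  have hlv : -(‖l‖ * ‖v‖) ≤ l v := (abs_le.1 (l.le_opNorm v)).1
  have hsq : κ / 2 * ‖v‖ ^ 2 - ‖l‖ * ‖v‖ + ‖l‖ ^ 2 / (2 * κ) =
      (κ * ‖v‖ - ‖l‖) ^ 2 / (2 * κ) := by
    field_simp
    ring
  have hnonneg : 0 ≤ (κ * ‖v‖ - ‖l‖) ^ 2 / (2 * κ) := by positivity
  linarith [hl v hv]

theorem norm_sub_sq_le_of_strongConvexOn (hF : StrongConvexOn K κ F) (hbdd : BddBelow (F '' K))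
    {x y : V} (hx : x ∈ K) (hy : y ∈ K) :
    κ / 4 * ‖x - y‖ ^ 2 ≤ (F x - sInf (F '' K)) + (F y - sInf (F '' K)) := by
  have hhalf : (0 : ℝ) ≤ 1 / 2 := by norm_num
  have hconv := hF.2 hx hy hhalf hhalf (by norm_num)
  have hinf : sInf (F '' K) ≤ F ((1 / 2 : ℝ) • x + (1 / 2 : ℝ) • y) :=
    csInf_le hbdd ⟨_, hF.1 hx hy hhalf hhalf (by norm_num), rfl⟩
  simp only [smul_eq_mul] at hconv
  linarith

theorem exists_isMinOn_of_strongConvexOn [CompleteSpace V] (hκ : 0 < κ)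
    (hF : StrongConvexOn K κ F) (hlsc : LowerSemicontinuousOn F K) (hKcl : IsClosed K)
    (hKne : K.Nonempty) : ∃ u ∈ K, IsMinOn F K u := by
  have hbdd := bddBelow_image_of_strongConvexOn hκ hF hlsc hKcl
  obtain ⟨s, -, hs, hsK⟩ := exists_seq_tendsto_sInf (hKne.image F) hbdd
  choose w hwK hws using hsK
  have hFw : Tendsto (fun n => F (w n)) atTop (𝓝 (sInf (F '' K))) := by simpa only [hws] using hs
  have hcauchy : CauchySeq w := by
    refine Metric.cauchySeq_iff.2 fun ε hε => ?_
    obtain ⟨N, hN⟩ := eventually_atTop.1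
      (hFw.eventually_lt_const (lt_add_of_pos_right _ (show 0 < κ / 8 * ε ^ 2 by positivity)))
    refine ⟨N, fun n hn k hk => ?_⟩
    have hle := norm_sub_sq_le_of_strongConvexOn hF hbdd (hwK n) (hwK k)
    have hlt : κ / 4 * ‖w n - w k‖ ^ 2 < κ / 4 * ε ^ 2 := by linarith [hN n hn, hN k hk]
    rw [dist_eq_norm]
    exact lt_of_pow_lt_pow_left₀ 2 hε.le (lt_of_mul_lt_mul_left hlt (by positivity))
  obtain ⟨u, hu⟩ := cauchySeq_tendsto_of_complete hcauchy
  have huK : u ∈ K := hKcl.mem_of_tendsto hu (Eventually.of_forall hwK)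
  have hwithin : Tendsto w atTop (𝓝[K] u) :=
    tendsto_nhdsWithin_iff.2 ⟨hu, Eventually.of_forall hwK⟩
  have hFu : F u ≤ sInf (F '' K) := le_of_forall_lt_imp_le_of_dense fun r hr =>
    ge_of_tendsto hFw ((hwithin.eventually (hlsc u huK r hr)).mono fun _ h => h.le)
  exact ⟨u, huK, fun v hv => hFu.trans (csInf_le hbdd ⟨v, hv, rfl⟩)⟩

theorem exists_forall_inner_sub_add_nonneg [CompleteSpace V] (hφ : ConvexOn ℝ K φ)
    (hlsc : LowerSemicontinuousOn φ K) (hKcl : IsClosed K) (hKne : K.Nonempty) (g : V) :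
    ∃ u ∈ K, ∀ v ∈ K, 0 ≤ ⟪u - g, v - u⟫ + φ v - φ u := by
  have hcont : Continuous fun v : V => 1 / 2 * ‖v‖ ^ 2 + ⟪-g, v⟫ := by fun_prop
  have hstrong : StrongConvexOn K 1 fun v => φ v + (1 / 2 * ‖v‖ ^ 2 + ⟪-g, v⟫) := by
    refine strongConvexOn_iff_convex.2
      ((hφ.add ((innerₛₗ ℝ (-g)).convexOn hφ.1)).congr fun v _ => ?_)
    simp only [Pi.add_apply, innerₛₗ_apply_apply]
    ring
  obtain ⟨u, huK, hu⟩ := exists_isMinOn_of_strongConvexOn one_pos hstrong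
    (hlsc.add (hcont.lowerSemicontinuous.lowerSemicontinuousOn K)) hKcl hKne
  refine ⟨u, huK, fun v hv => ?_⟩
  have h := UpperDiniDerivLE.nonneg_of_isMinOn hφ huK hu hv
    ((upperDiniDerivLE_norm_sq 1 u _).add (upperDiniDerivLE_inner (-g) u _))
  rw [inner_sub_left]
  rw [inner_neg_left] at h
  linarith

theorem norm_sub_le_of_forall_inner_sub_add_nonneg {g₁ g₂ u₁ u₂ : V} (hu₁ : u₁ ∈ K)
    (hu₂ : u₂ ∈ K) (h₁ : ∀ v ∈ K, 0 ≤ ⟪u₁ - g₁, v - u₁⟫ + φ v - φ u₁)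
    (h₂ : ∀ v ∈ K, 0 ≤ ⟪u₂ - g₂, v - u₂⟫ + φ v - φ u₂) : ‖u₁ - u₂‖ ≤ ‖g₁ - g₂‖ := by
  have hsum : ‖u₁ - u₂‖ ^ 2 ≤ ⟪g₁ - g₂, u₁ - u₂⟫ := by
    have h := add_nonneg (h₁ u₂ hu₂) (h₂ u₁ hu₁)
    rw [← neg_sub u₁ u₂, inner_neg_right] at h
    rw [← real_inner_self_eq_norm_sq]
    simp only [inner_sub_left] at h ⊢
    linarith
  rcases (norm_nonneg (u₁ - u₂)).eq_or_lt with h0 | h0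
  · exact h0 ▸ norm_nonneg _
  refine le_of_mul_le_mul_right ?_ h0
  rw [← sq]
  exact hsum.trans (real_inner_le_norm _ _)

theorem exists_lipschitzWith_sub_smul_lt_one {T : V → V} {L : NNReal} (hT : LipschitzWith L T)
    (hκ : 0 < κ) (hmono : ∀ u v, κ * ‖u - v‖ ^ 2 ≤ ⟪T u - T v, u - v⟫) :
    ∃ θ > (0 : ℝ), ∃ q : NNReal, q < 1 ∧ LipschitzWith q fun w => w - θ • T w := by
  set θ : ℝ := κ / (L ^ 2 + 1) with hθ
  have hθpos : 0 < θ := by positivity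
  have hθL : θ ^ 2 * L ^ 2 ≤ θ * κ := by
    have hκθ : κ = θ * (L ^ 2 + 1) := by rw [hθ]; field_simp
    nlinarith [sq_nonneg θ]
  refine ⟨θ, hθpos, (√(1 - θ * κ)).toNNReal, ?_, LipschitzWith.of_dist_le' fun u v => ?_⟩
  · rw [Real.toNNReal_lt_one, Real.sqrt_lt' one_pos]
    linarith [mul_pos hθpos hκ]
  · have hTuv : ‖T u - T v‖ ^ 2 ≤ L ^ 2 * ‖u - v‖ ^ 2 := by
      rw [← mul_pow]
      exact pow_le_pow_left₀ (norm_nonneg _) (hT.norm_sub_le u v) 2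
    rw [dist_eq_norm, dist_eq_norm, ← Real.sqrt_sq (norm_nonneg (u - v)),
      ← Real.sqrt_mul' _ (sq_nonneg _)]
    refine Real.le_sqrt_of_sq_le ?_
    calc ‖u - θ • T u - (v - θ • T v)‖ ^ 2
        = ‖(u - v) - θ • (T u - T v)‖ ^ 2 := by congr 2; module
      _ = ‖u - v‖ ^ 2 - 2 * θ * ⟪T u - T v, u - v⟫ + θ ^ 2 * ‖T u - T v‖ ^ 2 := by
        rw [norm_sub_sq_real, inner_smul_right, real_inner_comm, norm_smul, mul_pow,
          Real.norm_eq_abs, sq_abs]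
        ring
      _ ≤ ‖u - v‖ ^ 2 - 2 * θ * (κ * ‖u - v‖ ^ 2) + θ ^ 2 * (L ^ 2 * ‖u - v‖ ^ 2) := by
        gcongr
        exact hmono u v
      _ ≤ (1 - θ * κ) * ‖u - v‖ ^ 2 := by nlinarith [sq_nonneg ‖u - v‖]

theorem exists_variationalInequality_solution [CompleteSpace V] {T : V → V} {L : NNReal}
    (hT : LipschitzWith L T) (hκ : 0 < κ) (hmono : ∀ u v, κ * ‖u - v‖ ^ 2 ≤ ⟪T u - T v, u - v⟫)
    (hφ : ConvexOn ℝ K φ) (hlsc : LowerSemicontinuousOn φ K) (hKcl : IsClosed K)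
    (hKne : K.Nonempty) : ∃ u ∈ K, ∀ v ∈ K, 0 ≤ ⟪T u, v - u⟫ + φ v - φ u := by
  obtain ⟨θ, hθ, q, hq, hlip⟩ := exists_lipschitzWith_sub_smul_lt_one hT hκ hmono
  have hlscθ : LowerSemicontinuousOn (fun v => θ * φ v) K :=
    (continuous_const_mul θ).comp_lowerSemicontinuousOn hlsc (monotone_mul_left_of_nonneg hθ.le)
  choose prox hproxK hprox using
    exists_forall_inner_sub_add_nonneg (hφ.smul hθ.le) hlscθ hKcl hKne
  have hprox_lip : LipschitzWith 1 prox := LipschitzWith.mk_one fun g₁ g₂ => by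
    simpa only [dist_eq_norm] using norm_sub_le_of_forall_inner_sub_add_nonneg
      (hproxK g₁) (hproxK g₂) (hprox g₁) (hprox g₂)
  have hcontr : ContractingWith q fun w => prox (w - θ • T w) :=
    ⟨hq, by simpa only [one_mul, Function.comp_def] using hprox_lip.comp hlip⟩
  obtain ⟨u, hu⟩ : ∃ u, prox (u - θ • T u) = u := ⟨_, hcontr.fixedPoint_isFixedPt⟩
  refine ⟨u, hu ▸ hproxK _, fun v hv => ?_⟩
  have h := hprox (u - θ • T u) v hv
  rw [hu, sub_sub_cancel, inner_smul_left] at h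
  simp only [conj_trivial, smul_eq_mul] at h
  refine nonneg_of_mul_nonneg_right (a := θ) ?_ hθ
  linarith

end Hilbert

section VHI

variable {V : Type*} [NormedAddCommGroup V] [InnerProductSpace ℝ V]

/-- `u` solves the variational-hemivariational inequality on `K` with operator `A`, convex part
`Φ`, load `f`, and hemivariational part `J`, where `J u v` stands for the generalized directional
derivative at `u` in the direction `v - u`. -/
def IsVHISolution (K : Set V) (A : V → V →L[ℝ] ℝ) (Φ : V → ℝ) (J : V → V → ℝ) (f : V →L[ℝ] ℝ)
    (u : V) : Prop :=
  u ∈ K ∧ ∀ v ∈ K, A u (v - u) + Φ v - Φ u + J u v ≥ f (v - u)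

variable {K : Set V} {A : V → V →L[ℝ] ℝ} {Φ : V → ℝ} {m : ℝ}

theorem IsVHISolution.norm_sub_le {J : V → V → ℝ} {β : ℝ}
    (hA : ∀ u v, m * ‖u - v‖ ^ 2 ≤ (A u - A v) (u - v))
    (hJ : ∀ u v, J u v + J v u ≤ β * ‖u - v‖ ^ 2) (hβ : β < m) {f₁ f₂ : V →L[ℝ] ℝ} {u₁ u₂ : V}
    (h₁ : IsVHISolution K A Φ J f₁ u₁) (h₂ : IsVHISolution K A Φ J f₂ u₂) :
    ‖u₁ - u₂‖ ≤ (m - β)⁻¹ * ‖f₁ - f₂‖ := by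
  have hsum : (m - β) * ‖u₁ - u₂‖ ^ 2 ≤ (f₁ - f₂) (u₁ - u₂) := by
    have h₁₂ := h₁.2 u₂ h₂.1
    have h₂₁ := h₂.2 u₁ h₁.1
    have hmono := hA u₁ u₂
    rw [← neg_sub u₁ u₂, map_neg, map_neg] at h₁₂
    rw [sub_apply] at hmono ⊢
    linarith [hJ u₁ u₂]
  rw [le_inv_mul_iff₀ (sub_pos.2 hβ)]
  rcases (norm_nonneg (u₁ - u₂)).eq_or_lt with h0 | h0
  · rw [← h0, mul_zero]
    exact norm_nonneg _
  refine le_of_mul_le_mul_right ?_ h0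
  calc (m - β) * ‖u₁ - u₂‖ * ‖u₁ - u₂‖ = (m - β) * ‖u₁ - u₂‖ ^ 2 := by ring
    _ ≤ (f₁ - f₂) (u₁ - u₂) := hsum
    _ ≤ ‖f₁ - f₂‖ * ‖u₁ - u₂‖ := (le_abs_self _).trans ((f₁ - f₂).le_opNorm _)

section Existence

variable [CompleteSpace V] {W : Type*} [NormedAddCommGroup W] [InnerProductSpace ℝ W]
  [CompleteSpace W]

/-- The Riesz representative of `A w - f - α • ⟪γ w, γ ·⟫`. The last term is the part of the
operator that is handed over to the nonsmooth potential in order to make it convex. -/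
noncomputable def shiftedOperator (A : V → V →L[ℝ] ℝ) (f : V →L[ℝ] ℝ) (γ : V →L[ℝ] W) (α : ℝ)
    (w : V) : V :=
  (InnerProductSpace.toDual ℝ V).symm (A w - f) - α • ContinuousLinearMap.adjoint γ (γ w)

variable {γ : V →L[ℝ] W} {α : ℝ}

theorem inner_shiftedOperator (f : V →L[ℝ] ℝ) (w x : V) :
    ⟪shiftedOperator A f γ α w, x⟫ = A w x - f x - α * ⟪γ w, γ x⟫ := by
  rw [shiftedOperator, inner_sub_left, InnerProductSpace.toDual_symm_apply, real_inner_smul_left,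
    ContinuousLinearMap.adjoint_inner_left, sub_apply]

theorem exists_lipschitzWith_shiftedOperator {L : NNReal} (hA : LipschitzWith L A)
    (f : V →L[ℝ] ℝ) : ∃ L', LipschitzWith L' (shiftedOperator A f γ α) :=
  ⟨_, ((InnerProductSpace.toDual ℝ V).symm.lipschitz.comp (hA.sub (.const f))).sub
    (α • (ContinuousLinearMap.adjoint γ ∘L γ)).lipschitz⟩

theorem le_inner_shiftedOperator_sub {c : ℝ} (hA : ∀ u v, m * ‖u - v‖ ^ 2 ≤ (A u - A v) (u - v))
    (hγ : ∀ v, ‖γ v‖ ≤ c * ‖v‖) (hα : 0 ≤ α) (f : V →L[ℝ] ℝ) (u v : V) :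
    (m - α * c ^ 2) * ‖u - v‖ ^ 2 ≤
      ⟪shiftedOperator A f γ α u - shiftedOperator A f γ α v, u - v⟫ := by
  have hγsq : α * ‖γ (u - v)‖ ^ 2 ≤ α * (c * ‖u - v‖) ^ 2 := by
    gcongr
    exact hγ _
  have hinner : ⟪γ u, γ (u - v)⟫ - ⟪γ v, γ (u - v)⟫ = ‖γ (u - v)‖ ^ 2 := by
    rw [← inner_sub_left, ← map_sub, real_inner_self_eq_norm_sq]
  have hmono := hA u v
  rw [sub_apply] at hmono
  rw [inner_sub_left, inner_shiftedOperator, inner_shiftedOperator]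
  linear_combination hmono + hγsq + α * hinner

theorem exists_isVHISolution {L : NNReal} (hAlip : LipschitzWith L A)
    (hA : ∀ u v, m * ‖u - v‖ ^ 2 ≤ (A u - A v) (u - v)) (hΦ : ConvexOn ℝ K Φ)
    (hΦlsc : LowerSemicontinuousOn Φ K) (hKcl : IsClosed K) (hKne : K.Nonempty)
    {c : ℝ} (hγ : ∀ v, ‖γ v‖ ≤ c * ‖v‖) (hα : 0 ≤ α) (hαm : α * c ^ 2 < m)
    {P : W → ℝ} (hP : ConvexOn ℝ Set.univ fun a => P a + α / 2 * ‖a‖ ^ 2) (hPcont : Continuous P)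
    {D : W → W → ℝ} (hD : ∀ a b, UpperDiniDerivLE P a (b - a) (D a b)) (f : V →L[ℝ] ℝ) :
    ∃ u, IsVHISolution K A Φ (fun u v => D (γ u) (γ v)) f u := by
  obtain ⟨L', hT⟩ := exists_lipschitzWith_shiftedOperator (γ := γ) (α := α) hAlip f
  have hQ : ConvexOn ℝ K fun v => P (γ v) + α / 2 * ‖γ v‖ ^ 2 :=
    (hP.comp_linearMap γ.toLinearMap).subset (Set.subset_univ K) hΦ.1
  have hQcont : Continuous fun v => P (γ v) + α / 2 * ‖γ v‖ ^ 2 := by fun_prop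
  obtain ⟨u, huK, hu⟩ := exists_variationalInequality_solution hT (sub_pos.2 hαm)
    (le_inner_shiftedOperator_sub hA hγ hα f) (hΦ.add hQ)
    (hΦlsc.add (hQcont.lowerSemicontinuous.lowerSemicontinuousOn K)) hKcl hKne
  set p := shiftedOperator A f γ α u with hp
  -- The inequality for `u` says that `u` minimizes its linearization over `K`; only now is the
  -- quadratic term differentiated, and its derivative cancels the shift in the operator.
  have hmin : IsMinOn (fun v => Φ v + (P (γ v) + α / 2 * ‖γ v‖ ^ 2 + ⟪p, v⟫)) K u := by
    refine isMinOn_iff.2 fun v hv => ?_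
    have h := hu v hv
    simp only [inner_sub_right, Pi.add_apply] at h
    linarith
  refine ⟨u, huK, fun v hv => ?_⟩
  have hDiniP : UpperDiniDerivLE P (γ u) (γ (v - u)) (D (γ u) (γ v)) := by
    rw [map_sub]
    exact hD _ _
  have h := UpperDiniDerivLE.nonneg_of_isMinOn hΦ huK hmin hv
    (((hDiniP.add (upperDiniDerivLE_norm_sq α _ _)).comp_linear γ.toLinearMap).add
      (upperDiniDerivLE_inner p u (v - u)))
  rw [hp, inner_shiftedOperator] at h
  linarith

end Existence

end VHI

theorem stmt13_general {V : Type*} [NormedAddCommGroup V] [InnerProductSpace ℝ V]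
    [CompleteSpace V] {E : Type*} [NormedAddCommGroup E] [InnerProductSpace ℝ E]
    [CompleteSpace E] {Δ : Type*} [MeasurableSpace Δ] {μ : Measure Δ} [IsFiniteMeasure μ]
    {γ : V →L[ℝ] Lp E 2 μ} {c : ℝ} (hγ : ∀ v, ‖γ v‖ ≤ c * ‖v‖)
    {ψ : E → ℝ} (hψ : LocallyLipschitz ψ) {cψ : NNReal}
    (hgrowth : ∀ z, ∀ ξ ∈ clarkeSubdifferential ψ z, ‖ξ‖ ≤ cψ * (1 + ‖z‖)) {α : ℝ} (hα : 0 ≤ α)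
    (hψmono : ∀ x y, clarkeDeriv ψ x (y - x) + clarkeDeriv ψ y (x - y) ≤ α * ‖x - y‖ ^ 2)
    {K : Set V} (hKne : K.Nonempty) (hKcl : IsClosed K) {A : V → V →L[ℝ] ℝ} {L : NNReal}
    (hAlip : LipschitzWith L A) {m : ℝ} (hA : ∀ u v, m * ‖u - v‖ ^ 2 ≤ (A u - A v) (u - v))
    {Φ : V → ℝ} (hΦ : ConvexOn ℝ K Φ) (hΦlsc : LowerSemicontinuousOn Φ K)
    (hαm : α * c ^ 2 < m) (f : V →L[ℝ] ℝ) :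
    (∃! u, IsVHISolution K A Φ
      (fun u v => ∫ x, clarkeDeriv ψ (γ u x) (γ v x - γ u x) ∂μ) f u) ∧
    ∃ C > 0, ∀ f₁ f₂ u₁ u₂,
      IsVHISolution K A Φ (fun u v => ∫ x, clarkeDeriv ψ (γ u x) (γ v x - γ u x) ∂μ) f₁ u₁ →
      IsVHISolution K A Φ (fun u v => ∫ x, clarkeDeriv ψ (γ u x) (γ v x - γ u x) ∂μ) f₂ u₂ →
      ‖u₁ - u₂‖ ≤ C * ‖f₁ - f₂‖ := by
  have hG z w := clarkeDeriv_le_of_norm_clarkeSubdifferential_le hψ (hgrowth z) w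
  have hJ u v : (∫ x, clarkeDeriv ψ (γ u x) (γ v x - γ u x) ∂μ) +
      ∫ x, clarkeDeriv ψ (γ v x) (γ u x - γ v x) ∂μ ≤ α * c ^ 2 * ‖u - v‖ ^ 2 := by
    refine (integral_clarkeDeriv_add_le hψ hG hψmono (γ u) (γ v)).trans ?_
    rw [← map_sub, mul_assoc, ← mul_pow]
    gcongr
    exact hγ _
  obtain ⟨u, hu⟩ := exists_isVHISolution hAlip hA hΦ hΦlsc hKcl hKne hγ hα hαm
    (convexOn_integral_comp_add_norm_sq hψ hG hψmono)
    (continuous_integral_comp_of_clarkeDeriv_add_le hψ hG hψmono)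
    (fun a b => integral_clarkeDeriv_coeFn_sub (f := ψ) a b ▸
      upperDiniDerivLE_integral_comp hψ hG a (b - a)) f
  refine ⟨⟨u, hu, fun w hw => ?_⟩, (m - α * c ^ 2)⁻¹, inv_pos.2 (sub_pos.2 hαm),
    fun f₁ f₂ u₁ u₂ => IsVHISolution.norm_sub_le hA hJ hαm⟩
  simpa only [sub_self, norm_zero, mul_zero, norm_le_zero_iff, sub_eq_zero] using
    IsVHISolution.norm_sub_le hA hJ hαm hw hu

theorem stmt13 {V : Type*} [NormedAddCommGroup V] [InnerProductSpace ℝ V] [CompleteSpace V]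
    {Δ : Type*} [MeasurableSpace Δ] (μ : Measure Δ) [IsFiniteMeasure μ]
    (m : ℕ) (hm : 1 ≤ m)
    (γψ : V →L[ℝ] (Lp (EuclideanSpace ℝ (Fin m)) 2 μ))
    (cΔ : ℝ) (hcΔ : 0 < cΔ) (hγ : ∀ v : V, ‖γψ v‖ ≤ cΔ * ‖v‖)
    (ψ : EuclideanSpace ℝ (Fin m) → ℝ)
    (hψlip : ∀ z : EuclideanSpace ℝ (Fin m),
      ∃ (L : NNReal) (s : Set (EuclideanSpace ℝ (Fin m))), s ∈ 𝓝 z ∧ LipschitzOnWith L ψ s)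
    (cψ : ℝ) (hcψ : 0 ≤ cψ)
    (hψgrowth : ∀ z ξ : EuclideanSpace ℝ (Fin m),
      (∀ w, ⟪ξ, w⟫ ≤ clarkeDeriv ψ z w) → ‖ξ‖ ≤ cψ * (1 + ‖z‖))
    (αψ : ℝ) (hαψ : 0 ≤ αψ)
    (hψmon : ∀ z₁ z₂ : EuclideanSpace ℝ (Fin m),
      clarkeDeriv ψ z₁ (z₂ - z₁) + clarkeDeriv ψ z₂ (z₁ - z₂) ≤ αψ * ‖z₁ - z₂‖ ^ 2)
    (K : Set V) (hKne : K.Nonempty) (hKcl : IsClosed K) (hKcv : Convex ℝ K)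
    (A : V → (V →L[ℝ] ℝ)) (LA : ℝ) (hLA : 0 < LA)
    (hALip : ∀ v₁ v₂ : V, ‖A v₁ - A v₂‖ ≤ LA * ‖v₁ - v₂‖)
    (mA : ℝ) (hmA : 0 < mA)
    (hAmon : ∀ v₁ v₂ : V, (A v₁ - A v₂) (v₁ - v₂) ≥ mA * ‖v₁ - v₂‖ ^ 2)
    (Φ : V → ℝ) (hΦcv : ConvexOn ℝ Set.univ Φ) (hΦcont : Continuous Φ)
    (f : V →L[ℝ] ℝ) (hsmall : αψ * cΔ ^ 2 < mA) :
    (∃! u : V, u ∈ K ∧ ∀ v ∈ K,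
      (A u) (v - u) + Φ v - Φ u +
        (∫ x, clarkeDeriv ψ ((γψ u) x) ((γψ v) x - (γψ u) x) ∂μ) ≥ f (v - u)) ∧
    (∃ c > (0:ℝ), ∀ f₁ f₂ : V →L[ℝ] ℝ, ∀ u₁ u₂ : V,
      (u₁ ∈ K ∧ ∀ v ∈ K,
        (A u₁) (v - u₁) + Φ v - Φ u₁ +
          (∫ x, clarkeDeriv ψ ((γψ u₁) x) ((γψ v) x - (γψ u₁) x) ∂μ) ≥ f₁ (v - u₁)) →
      (u₂ ∈ K ∧ ∀ v ∈ K,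
        (A u₂) (v - u₂) + Φ v - Φ u₂ +
          (∫ x, clarkeDeriv ψ ((γψ u₂) x) ((γψ v) x - (γψ u₂) x) ∂μ) ≥ f₂ (v - u₂)) →
      ‖u₁ - u₂‖ ≤ c * ‖f₁ - f₂‖) := by
  exact stmt13_general (cψ := ⟨cψ, hcψ⟩) hγ hψlip hψgrowth hαψ hψmon hKne hKcl
    (.of_dist_le' fun u v => by simpa only [dist_eq_norm] using hALip u v) hAmon
    (hΦcv.subset (Set.subset_univ K) hKcv)
    (hΦcont.lowerSemicontinuous.lowerSemicontinuousOn K) hsmall f
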